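/- (5-edge case) Let s be a splitting coloring of P = {1,…,14} with no monochromatic K₄, no monochromatic K_{4,3}, and no monochromatic K_{5,2}, and let c be the induced coloring on 7-element subsets of P. Then for all 7-element subsets X, Y of P with |X ∩ Y| = 5 (so c(XY) = r) and every triple (r, j, k) ∈ M₂, there exists a 7-element subset Z of P, distinct from X and Y, with c(XZ) = j and c(YZ) = k. -/

import Mathlib

/-- The three colors: red `r` and the two blues `b0`, `b1`. -/
inductive Color where
  | r : Color
  | b0 : Color
  | b1 : Color
  deriving DecidableEq

/-- `M₂ = L³ \ {b₀,b₁}³`: the triples of colors that are not all blue. -/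
def M2 (t : Color × Color × Color) : Prop :=
  ¬ ((t.1 = Color.b0 ∨ t.1 = Color.b1) ∧ (t.2.1 = Color.b0 ∨ t.2.1 = Color.b1) ∧
     (t.2.2 = Color.b0 ∨ t.2.2 = Color.b1))

/-!
The color `c(XZ)` depends only on the trace `X ∩ Z`, so a witness `Z` may be built from any small
`S ⊆ X ∪ Y` with the right traces on `X` and `Y`, by adding points outside `X ∪ Y`. Having no
monochromatic `K₄`, the set `X ∩ Y` contains a pair of each blue color: as `S` it yields that blue
twice, and enlarged by a point of `X \ Y` it yields red and that blue. Having no monochromatic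
`K_{5,2}`, there is a `b₀` pair between `X ∩ Y` and `X \ Y`, which yields `b₀` and `b₁`. Three
points of `X ∩ Y` yield red twice.
-/

open Finset

/-- The blue colors `{b₀, b₁}`, the possible values of a splitting coloring. -/
def IsBlue (b : Color) : Prop :=
  b = Color.b0 ∨ b = Color.b1

/-- `s` has a monochromatic `K_m`, in any of the three colors. -/
def HasMonoClique {α : Type*} (s : α → α → Color) (m : ℕ) : Prop :=
  ∃ (b : Color) (W : Finset α), #W = m ∧ ∀ i ∈ W, ∀ j ∈ W, i ≠ j → s i j = b

/-- `s` has a monochromatic `K_{m,l}`, in any of the three colors. -/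
def HasMonoBiclique {α : Type*} (s : α → α → Color) (m l : ℕ) : Prop :=
  ∃ (b : Color) (A B : Finset α), Disjoint A B ∧ #A = m ∧ #B = l ∧ ∀ i ∈ A, ∀ j ∈ B, s i j = b

/-- `TraceColor s T b`: the induced coloring gives color `b` to two sets with intersection `T`.
This is a relation because `s i j` is read off the unordered pair `{i, j}`. -/
inductive TraceColor {α : Type*} [DecidableEq α] (s : α → α → Color) : Finset α → Color → Prop
  | empty : TraceColor s ∅ Color.b0
  | singleton (i : α) : TraceColor s {i} Color.b1
  | pair {i j : α} (hij : i ≠ j) : TraceColor s {i, j} (s i j)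
  | large {T : Finset α} (hT : 3 ≤ #T) : TraceColor s T Color.r

/-- `c` is the coloring that `s` induces on the `n`-element subsets; its values on other pairs of
sets are arbitrary. -/
def IsInducedColoring {α : Type*} [DecidableEq α] (n : ℕ) (s : α → α → Color)
    (c : Finset α → Finset α → Color) : Prop :=
  ∀ ⦃X Y : Finset α⦄ ⦃b : Color⦄, #X = n → #Y = n → X ≠ Y → TraceColor s (X ∩ Y) b → c X Y = b

/-- The need `(c(XY), j, k)` of the edge `XY` has a witness among the `n`-element sets. -/
def NeedMet {α : Type*} (n : ℕ) (c : Finset α → Finset α → Color) (X Y : Finset α)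
    (j k : Color) : Prop :=
  ∃ Z : Finset α, #Z = n ∧ Z ≠ X ∧ Z ≠ Y ∧ c X Z = j ∧ c Y Z = k

theorem NeedMet.symm {α : Type*} {n : ℕ} {c : Finset α → Finset α → Color} {X Y : Finset α}
    {j k : Color} : NeedMet n c X Y j k → NeedMet n c Y X k j :=
  fun ⟨Z, hZ, hZX, hZY, hj, hk⟩ ↦ ⟨Z, hZ, hZY, hZX, hk, hj⟩

theorem IsBlue.exists_forall_eq_of_ne {b : Color} (hb : IsBlue b) :
    ∃ b', ∀ x, IsBlue x → x ≠ b → x = b' := by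
  rcases hb with rfl | rfl
  · exact ⟨Color.b1, fun _ hx hne ↦ hx.resolve_left hne⟩
  · exact ⟨Color.b0, fun _ hx hne ↦ hx.resolve_right hne⟩

section Splitting

variable {α : Type*} {s : α → α → Color} {b : Color} {m l : ℕ}

theorem exists_pair_of_not_hasMonoClique (hs : ∀ i j, i ≠ j → IsBlue (s i j))
    (hK : ¬ HasMonoClique s m) {C : Finset α} (hC : m ≤ #C) (hb : IsBlue b) :
    ∃ p ∈ C, ∃ q ∈ C, p ≠ q ∧ s p q = b := by
  by_contra! hne
  obtain ⟨b', hb'⟩ := hb.exists_forall_eq_of_ne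
  obtain ⟨W, hWC, hW⟩ := exists_subset_card_eq hC
  exact hK ⟨b', W, hW, fun p hp q hq hpq ↦
    hb' _ (hs p q hpq) (hne p (hWC hp) q (hWC hq) hpq)⟩

theorem exists_pair_of_not_hasMonoBiclique (hs : ∀ i j, i ≠ j → IsBlue (s i j))
    (hK : ¬ HasMonoBiclique s m l) {A B : Finset α} (hAB : Disjoint A B) (hA : m ≤ #A)
    (hB : l ≤ #B) (hb : IsBlue b) : ∃ p ∈ A, ∃ q ∈ B, s p q = b := by
  by_contra! hne
  obtain ⟨b', hb'⟩ := hb.exists_forall_eq_of_ne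
  obtain ⟨A', hA', hcardA⟩ := exists_subset_card_eq hA
  obtain ⟨B', hB', hcardB⟩ := exists_subset_card_eq hB
  have hdisj : Disjoint A' B' := hAB.mono hA' hB'
  exact hK ⟨b', A', B', hdisj, hcardA, hcardB, fun p hp q hq ↦
    hb' _ (hs p q (disjoint_iff_ne.1 hdisj p hp q hq)) (hne p (hA' hp) q (hB' hq))⟩

end Splitting

theorem isInducedColoring_of_card {α : Type*} [DecidableEq α] {n : ℕ} {s : α → α → Color}
    {c : Finset α → Finset α → Color}
    (hc0 : ∀ X Y, #X = n → #Y = n → #(X ∩ Y) = 0 → c X Y = Color.b0)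
    (hc1 : ∀ X Y, #X = n → #Y = n → #(X ∩ Y) = 1 → c X Y = Color.b1)
    (hc2 : ∀ X Y, #X = n → #Y = n → ∀ i j, i ≠ j → X ∩ Y = {i, j} → c X Y = s i j)
    (hcr : ∀ X Y, #X = n → #Y = n → X ≠ Y → 3 ≤ #(X ∩ Y) → c X Y = Color.r) :
    IsInducedColoring n s c := by
  intro X Y b hX hY hXY hb
  generalize hT : X ∩ Y = T at hb
  cases hb with
  | empty => exact hc0 X Y hX hY (card_eq_zero.2 hT)
  | singleton i => exact hc1 X Y hX hY (card_eq_one.2 ⟨i, hT⟩)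
  | pair hij => exact hc2 X Y hX hY _ _ hij hT
  | large hcard => exact hcr X Y hX hY hXY (hT ▸ hcard)

section Traces

variable {α : Type*} [Fintype α] [DecidableEq α] {n : ℕ}

theorem exists_card_eq_and_inter_eq {U S : Finset α} (hSU : S ⊆ U) (hS : #S ≤ n)
    (hn : n ≤ #S + #Uᶜ) : ∃ Z, #Z = n ∧ U ∩ Z = S := by
  have hdisj : Disjoint S Uᶜ := disjoint_compl_right.mono_left hSU
  obtain ⟨Z, hSZ, hZ, hcard⟩ :=
    exists_subsuperset_card_eq (subset_union_left (s₂ := Uᶜ)) hS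
      (hn.trans_eq (card_union_of_disjoint hdisj).symm)
  refine ⟨Z, hcard, Subset.antisymm ?_ (subset_inter hSU hSZ)⟩
  calc
    U ∩ Z ⊆ U ∩ (S ∪ Uᶜ) := inter_subset_inter_left hZ
    _ = U ∩ S := by rw [inter_union_distrib_left, inter_compl, union_empty]
    _ ⊆ S := inter_subset_right

variable {s : α → α → Color} {c : Finset α → Finset α → Color} {X Y : Finset α}

theorem IsInducedColoring.needMet_of_traceColor (hc : IsInducedColoring n s c) (hX : #X = n)
    (hY : #Y = n) {S : Finset α} (hSU : S ⊆ X ∪ Y) (hS : #S < n) (hn : n ≤ #S + #(X ∪ Y)ᶜ)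
    {j k : Color} (hj : TraceColor s (X ∩ S) j) (hk : TraceColor s (Y ∩ S) k) :
    NeedMet n c X Y j k := by
  obtain ⟨Z, hZ, hZS⟩ := exists_card_eq_and_inter_eq hSU hS.le hn
  have hXZ : X ∩ Z = X ∩ S := by rw [← hZS, ← inter_assoc, inter_eq_left.2 subset_union_left]
  have hYZ : Y ∩ Z = Y ∩ S := by rw [← hZS, ← inter_assoc, inter_eq_left.2 subset_union_right]
  have not_subset : ¬ Z ⊆ X ∪ Y := fun h ↦ by
    rw [inter_eq_right.2 h] at hZS
    exact hS.ne (hZS ▸ hZ)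
  have hZX : Z ≠ X := fun h ↦ not_subset (h ▸ subset_union_left)
  have hZY : Z ≠ Y := fun h ↦ not_subset (h ▸ subset_union_right)
  exact ⟨Z, hZ, hZX, hZY, hc hX hZ hZX.symm (hXZ ▸ hj), hc hY hZ hZY.symm (hYZ ▸ hk)⟩

theorem IsInducedColoring.needMet_pair_pair (hc : IsInducedColoring n s c) (hX : #X = n)
    (hY : #Y = n) (hn : 2 < n) (hout : n ≤ 2 + #(X ∪ Y)ᶜ) {p q : α} (hp : p ∈ X ∩ Y)
    (hq : q ∈ X ∩ Y) (hpq : p ≠ q) : NeedMet n c X Y (s p q) (s p q) := by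
  have hS : {p, q} ⊆ X ∩ Y := insert_subset hp (singleton_subset_iff.2 hq)
  have hcard : #{p, q} = 2 := card_pair hpq
  refine hc.needMet_of_traceColor hX hY (hS.trans inter_subset_union) (hcard ▸ hn)
    (hcard ▸ hout) ?_ ?_
  · rw [inter_eq_right.2 (hS.trans inter_subset_left)]
    exact .pair hpq
  · rw [inter_eq_right.2 (hS.trans inter_subset_right)]
    exact .pair hpq

theorem IsInducedColoring.needMet_pair_b1 (hc : IsInducedColoring n s c) (hX : #X = n)
    (hY : #Y = n) (hn : 2 < n) (hout : n ≤ 2 + #(X ∪ Y)ᶜ) {p q : α} (hp : p ∈ X ∩ Y)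
    (hq : q ∈ X \ Y) : NeedMet n c X Y (s p q) Color.b1 := by
  rw [mem_inter] at hp
  rw [mem_sdiff] at hq
  have hpq : p ≠ q := ne_of_mem_of_not_mem hp.2 hq.2
  have hSX : {p, q} ⊆ X := insert_subset hp.1 (singleton_subset_iff.2 hq.1)
  have hcard : #{p, q} = 2 := card_pair hpq
  refine hc.needMet_of_traceColor hX hY (hSX.trans subset_union_left) (hcard ▸ hn)
    (hcard ▸ hout) ?_ ?_
  · rw [inter_eq_right.2 hSX]
    exact .pair hpq
  · rw [inter_insert_of_mem hp.2, inter_singleton_of_notMem hq.2]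
    exact .singleton p

theorem IsInducedColoring.needMet_r_pair (hc : IsInducedColoring n s c) (hX : #X = n)
    (hY : #Y = n) (hn : 3 < n) (hout : n ≤ 3 + #(X ∪ Y)ᶜ) {p q a : α} (hp : p ∈ X ∩ Y)
    (hq : q ∈ X ∩ Y) (hpq : p ≠ q) (ha : a ∈ X \ Y) : NeedMet n c X Y Color.r (s p q) := by
  rw [mem_inter] at hp hq
  rw [mem_sdiff] at ha
  have hpqX : {p, q} ⊆ X := insert_subset hp.1 (singleton_subset_iff.2 hq.1)
  have hpqY : {p, q} ⊆ Y := insert_subset hp.2 (singleton_subset_iff.2 hq.2)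
  have hSX : {a, p, q} ⊆ X := insert_subset ha.1 hpqX
  have hcard : #{a, p, q} = 3 := by
    rw [card_insert_of_notMem fun h ↦ ha.2 (hpqY h), card_pair hpq]
  refine hc.needMet_of_traceColor hX hY (hSX.trans subset_union_left) (hcard ▸ hn)
    (hcard ▸ hout) ?_ ?_
  · rw [inter_eq_right.2 hSX]
    exact .large hcard.ge
  · rw [inter_insert_of_notMem ha.2, inter_eq_right.2 hpqY]
    exact .pair hpq

theorem IsInducedColoring.needMet_r_r (hc : IsInducedColoring n s c) (hX : #X = n)
    (hY : #Y = n) (hn : 3 < n) (hout : n ≤ 3 + #(X ∪ Y)ᶜ) (hI : 3 ≤ #(X ∩ Y)) :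
    NeedMet n c X Y Color.r Color.r := by
  obtain ⟨S, hS, hcard⟩ := exists_subset_card_eq hI
  refine hc.needMet_of_traceColor hX hY (hS.trans inter_subset_union) (hcard ▸ hn)
    (hcard ▸ hout) ?_ ?_
  · rw [inter_eq_right.2 (hS.trans inter_subset_left)]
    exact .large hcard.ge
  · rw [inter_eq_right.2 (hS.trans inter_subset_right)]
    exact .large hcard.ge

end Traces

section Needs

variable {α : Type*} [Fintype α] [DecidableEq α] {n m l : ℕ} {s : α → α → Color}
  {c : Finset α → Finset α → Color} {X Y : Finset α} {b : Color}

theorem IsInducedColoring.needMet_blue_self (hc : IsInducedColoring n s c)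
    (hs : ∀ i j, i ≠ j → IsBlue (s i j)) (hK : ¬ HasMonoClique s m) (hX : #X = n) (hY : #Y = n)
    (hn : 2 < n) (hout : n ≤ 2 + #(X ∪ Y)ᶜ) (hI : m ≤ #(X ∩ Y)) (hb : IsBlue b) :
    NeedMet n c X Y b b := by
  obtain ⟨p, hp, q, hq, hpq, rfl⟩ := exists_pair_of_not_hasMonoClique hs hK hI hb
  exact hc.needMet_pair_pair hX hY hn hout hp hq hpq

theorem IsInducedColoring.needMet_r_blue (hc : IsInducedColoring n s c)
    (hs : ∀ i j, i ≠ j → IsBlue (s i j)) (hK : ¬ HasMonoClique s m) (hX : #X = n) (hY : #Y = n)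
    (hn : 3 < n) (hout : n ≤ 3 + #(X ∪ Y)ᶜ) (hI : m ≤ #(X ∩ Y)) (hXY : (X \ Y).Nonempty)
    (hb : IsBlue b) : NeedMet n c X Y Color.r b := by
  obtain ⟨p, hp, q, hq, hpq, rfl⟩ := exists_pair_of_not_hasMonoClique hs hK hI hb
  obtain ⟨a, ha⟩ := hXY
  exact hc.needMet_r_pair hX hY hn hout hp hq hpq ha

theorem IsInducedColoring.needMet_blue_b1 (hc : IsInducedColoring n s c)
    (hs : ∀ i j, i ≠ j → IsBlue (s i j)) (hK : ¬ HasMonoBiclique s m l) (hX : #X = n)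
    (hY : #Y = n) (hn : 2 < n) (hout : n ≤ 2 + #(X ∪ Y)ᶜ) (hI : m ≤ #(X ∩ Y))
    (hXY : l ≤ #(X \ Y)) (hb : IsBlue b) : NeedMet n c X Y b Color.b1 := by
  obtain ⟨p, hp, q, hq, rfl⟩ :=
    exists_pair_of_not_hasMonoBiclique hs hK (disjoint_sdiff_inter X Y).symm hI hXY hb
  exact hc.needMet_pair_b1 hX hY hn hout hp hq

theorem five_edge_needs_met_general (hc : IsInducedColoring n s c)
    (hs : ∀ i j, i ≠ j → IsBlue (s i j)) (hK4 : ¬ HasMonoClique s 4)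
    (hK52 : ¬ HasMonoBiclique s 5 2) (hX : #X = n) (hY : #Y = n) (hI : 5 ≤ #(X ∩ Y))
    (hIn : #(X ∩ Y) + 2 ≤ n) (hα : 3 * n ≤ Fintype.card α + #(X ∩ Y) + 2) (j k : Color) :
    NeedMet n c X Y j k := by
  have hXY : 2 ≤ #(X \ Y) := by
    have := card_sdiff_add_card_inter X Y
    omega
  have hout : n ≤ 2 + #(X ∪ Y)ᶜ := by
    have := card_union_add_card_inter X Y
    have := card_add_card_compl (X ∪ Y)
    omega
  have hI' : 5 ≤ #(Y ∩ X) := by rwa [inter_comm]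
  have hYX : 2 ≤ #(Y \ X) := by rwa [card_sdiff_comm (hY.trans hX.symm)]
  have hout' : n ≤ 2 + #(Y ∪ X)ᶜ := by rwa [union_comm]
  have blue_self {b} (hb : IsBlue b) : NeedMet n c X Y b b :=
    hc.needMet_blue_self hs hK4 hX hY (by omega) hout (by omega) hb
  have r_blue {b} (hb : IsBlue b) : NeedMet n c X Y Color.r b :=
    hc.needMet_r_blue hs hK4 hX hY (by omega) (by omega) (by omega) (card_pos.1 (by omega)) hb
  have blue_r {b} (hb : IsBlue b) : NeedMet n c X Y b Color.r :=
    (hc.needMet_r_blue hs hK4 hY hX (by omega) (by omega) (by omega) (card_pos.1 (by omega))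
      hb).symm
  match j, k with
  | .r, .r => exact hc.needMet_r_r hX hY (by omega) (by omega) (by omega)
  | .r, .b0 => exact r_blue (.inl rfl)
  | .r, .b1 => exact r_blue (.inr rfl)
  | .b0, .r => exact blue_r (.inl rfl)
  | .b1, .r => exact blue_r (.inr rfl)
  | .b0, .b0 => exact blue_self (.inl rfl)
  | .b1, .b1 => exact blue_self (.inr rfl)
  | .b0, .b1 => exact hc.needMet_blue_b1 hs hK52 hX hY (by omega) hout hI hXY (.inl rfl)
  | .b1, .b0 => exact (hc.needMet_blue_b1 hs hK52 hY hX (by omega) hout' hI' hYX (.inl rfl)).symm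

end Needs

/-- (5-edge case) For 7-element subsets `X`, `Y` with `|X ∩ Y| = 5` (so `c(XY) = r`),
every need `(r, j, k) ∈ M₂` of the edge `XY` has a witness: a 7-element subset `Z`,
distinct from `X` and `Y`, with `c(XZ) = j` and `c(YZ) = k`. -/
theorem five_edge_needs_met
    -- `s` is a splitting coloring: symmetric with values in {b₀, b₁}
    (s : Fin 14 → Fin 14 → Color)
    (hssym : ∀ i j : Fin 14, i ≠ j → s i j = s j i)
    (hsblue : ∀ i j : Fin 14, i ≠ j → s i j = Color.b0 ∨ s i j = Color.b1)
    -- `s` has no monochromatic K₄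
    (hK4 : ¬ ∃ (b : Color) (W : Finset (Fin 14)), W.card = 4 ∧
      ∀ i ∈ W, ∀ j ∈ W, i ≠ j → s i j = b)
    -- `s` has no monochromatic K_{4,3}
    (hK43 : ¬ ∃ (b : Color) (A B : Finset (Fin 14)), Disjoint A B ∧ A.card = 4 ∧ B.card = 3 ∧
      ∀ i ∈ A, ∀ j ∈ B, s i j = b)
    -- `s` has no monochromatic K_{5,2}
    (hK52 : ¬ ∃ (b : Color) (A B : Finset (Fin 14)), Disjoint A B ∧ A.card = 5 ∧ B.card = 2 ∧
      ∀ i ∈ A, ∀ j ∈ B, s i j = b)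
    -- `c` is the coloring on 7-element subsets induced by `s`
    (c : Finset (Fin 14) → Finset (Fin 14) → Color)
    (hc0 : ∀ X Y : Finset (Fin 14), X.card = 7 → Y.card = 7 →
      (X ∩ Y).card = 0 → c X Y = Color.b0)
    (hc1 : ∀ X Y : Finset (Fin 14), X.card = 7 → Y.card = 7 →
      (X ∩ Y).card = 1 → c X Y = Color.b1)
    (hc2 : ∀ X Y : Finset (Fin 14), X.card = 7 → Y.card = 7 → ∀ i j : Fin 14, i ≠ j →
      X ∩ Y = {i, j} → c X Y = s i j)
    (hcr : ∀ X Y : Finset (Fin 14), X.card = 7 → Y.card = 7 → X ≠ Y →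
      3 ≤ (X ∩ Y).card → c X Y = Color.r)
    :
    ∀ X Y : Finset (Fin 14), X.card = 7 → Y.card = 7 → (X ∩ Y).card = 5 →
      ∀ j k : Color, M2 (Color.r, j, k) →
      ∃ Z : Finset (Fin 14), Z.card = 7 ∧ Z ≠ X ∧ Z ≠ Y ∧ c X Z = j ∧ c Y Z = k := by
  intro X Y hX hY h5 j k _
  exact five_edge_needs_met_general (isInducedColoring_of_card hc0 hc1 hc2 hcr) hsblue hK4 hK52
    hX hY h5.ge (by rw [h5]) (by rw [h5, Fintype.card_fin]) j k
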